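/- For every real path-loss exponent η ≥ 2, all κ, P, N > 0, every integer T ≥ 7, and every integer t with 4 ≤ t ≤ T−3, if the power splits are α_i = 1/2 for all i = 1, …, T−2, then the reception rate satisfies R_t = (1/2) log₂(1 + P_sig(t)/(P_int(t) + N)) ≥ (1/2) log₂(1 + κP/(2(π² κP + N))), and this lower bound is strictly positive and does not depend on T or t. -/

import Mathlib

/-!
Write `K = κP`. At node `t` the nearest transmitter alone contributes `(1 - α_{t-1}) K` to the
signal power, so it suffices to bound the interference power by `π² K`. Since `η ≥ 2`, a node at
distance `x ≥ 1` is received with amplitude at most `√K / x`, whatever its power split; hence a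
coherent pair of nodes, the nearer of which is at distance `x`, delivers at most `4K / x²`. The
interfering pairs on the left start at distance `3` and those on the right at distance `1`, so
`∑ 1 / j² = π² / 6` bounds the interference by
`4K (π² / 6 - 1 - 1 / 4) + 4K π² / 6 = (4π² / 3 - 5) K`, and `π² ≤ 15`.
-/

open Finset Real

/-- Coherently combined signal power at node `t` under two-hop myopic
decode-forward in the equally-spaced Gaussian multiple-relay channel. -/
noncomputable def Psig (η κ P : ℝ) (t : ℕ) (α : ℕ → ℝ) : ℝ :=
  (Real.sqrt ((3 : ℝ) ^ (-η) * α (t - 3) * (κ * P)) +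
      Real.sqrt ((2 : ℝ) ^ (-η) * (1 - α (t - 2)) * (κ * P))) ^ 2
  + (Real.sqrt ((2 : ℝ) ^ (-η) * α (t - 2) * (κ * P)) +
      Real.sqrt ((1 - α (t - 1)) * (κ * P))) ^ 2

/-- Interference power at node `t` under two-hop myopic decode-forward in the
`T`-node Gaussian multiple-relay channel with unit node spacing. -/
noncomputable def Pint (η κ P : ℝ) (T t : ℕ) (α : ℕ → ℝ) : ℝ :=
  (∑ j ∈ Finset.Icc 3 (t - 2),
      (Real.sqrt ((j : ℝ) ^ (-η) * (1 - α (t - j)) * (κ * P)) +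
        Real.sqrt (((j : ℝ) + 1) ^ (-η) * α (t - j - 1) * (κ * P))) ^ 2)
  + ((t : ℝ) - 1) ^ (-η) * (1 - α 1) * (κ * P)
  + (∑ j ∈ Finset.Icc 1 (T - t - 3),
      (Real.sqrt ((j : ℝ) ^ (-η) * α (t + j) * (κ * P)) +
        Real.sqrt (((j : ℝ) + 1) ^ (-η) * (1 - α (t + j + 1)) * (κ * P))) ^ 2)
  + (Real.sqrt (((T : ℝ) - (t : ℝ) - 2) ^ (-η) * α (T - 2) * (κ * P)) +
      Real.sqrt (((T : ℝ) - (t : ℝ) - 1) ^ (-η) * (κ * P))) ^ 2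

/-- Reception rate at node `t`: `R_t = ½ log₂(1 + P_sig(t)/(P_int(t) + N))`. -/
noncomputable def Rt (η κ P N : ℝ) (T t : ℕ) (α : ℕ → ℝ) : ℝ :=
  (1 / 2) * Real.logb 2 (1 + Psig η κ P t α / (Pint η κ P T t α + N))

/-- Power received coherently from two nodes at distances `x` and `y` that spend the fractions `a`
and `b` of their power on the same message, where `K = κP`. The interference consists of such
pairs, up to the isolated contribution of node `1`. -/
noncomputable def pairPower (η K x a y b : ℝ) : ℝ :=
  (√(x ^ (-η) * a * K) + √(y ^ (-η) * b * K)) ^ 2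

/-- The part of the interference power at node `t` caused by nodes `1, …, t - 3`, where `K = κP`
and `j` is the distance from `t` to the nearer node of a pair. -/
noncomputable def upstreamInterference (η K : ℝ) (t : ℕ) (α : ℕ → ℝ) : ℝ :=
  ∑ j ∈ Icc 3 (t - 2), pairPower η K j (1 - α (t - j)) (j + 1) (α (t - j - 1))
    + ((t : ℝ) - 1) ^ (-η) * (1 - α 1) * K

/-- The part of the interference power at node `t` caused by nodes `t + 1, …, T - 1`, where
`K = κP`. Node `T - 1` spends its full power on one message, whence the fraction `1`. -/
noncomputable def downstreamInterference (η K : ℝ) (T t : ℕ) (α : ℕ → ℝ) : ℝ :=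
  ∑ j ∈ Icc 1 (T - t - 3), pairPower η K j (α (t + j)) (j + 1) (1 - α (t + j + 1))
    + pairPower η K ((T : ℝ) - t - 2) (α (T - 2)) ((T : ℝ) - t - 1) 1

lemma Pint_eq_upstream_add_downstream (η κ P : ℝ) (T t : ℕ) (α : ℕ → ℝ) :
    Pint η κ P T t α =
      upstreamInterference η (κ * P) t α + downstreamInterference η (κ * P) T t α := by
  simp only [Pint, upstreamInterference, downstreamInterference, pairPower, mul_one, add_assoc]

lemma pairPower_nonneg (η K x a y b : ℝ) : 0 ≤ pairPower η K x a y b :=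
  sq_nonneg _

section PathLoss

variable {η K x y a b : ℝ}

lemma rpow_neg_mul_mul_le_div_sq (hη : 2 ≤ η) (hK : 0 ≤ K) (hx : 1 ≤ x) (ha : a ≤ 1) :
    x ^ (-η) * a * K ≤ K / x ^ 2 := by
  have hx₀ : 0 < x := by linarith
  calc x ^ (-η) * a * K
      ≤ x ^ (-η) * 1 * K := by gcongr
    _ ≤ x ^ (-2 : ℝ) * 1 * K := by gcongr
    _ = K / x ^ 2 := by rw [rpow_neg hx₀.le, rpow_two]; ring

lemma sqrt_rpow_neg_mul_mul_le (hη : 2 ≤ η) (hK : 0 ≤ K) (hx : 1 ≤ x) (ha : a ≤ 1) :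
    √(x ^ (-η) * a * K) ≤ √K / x := by
  have hx₀ : 0 ≤ x := by linarith
  calc √(x ^ (-η) * a * K)
      ≤ √(K / x ^ 2) := sqrt_le_sqrt (rpow_neg_mul_mul_le_div_sq hη hK hx ha)
    _ = √K / x := by rw [sqrt_div hK, sqrt_sq hx₀]

lemma pairPower_le (hη : 2 ≤ η) (hK : 0 ≤ K) (hx : 1 ≤ x) (hxy : x ≤ y) (ha : a ≤ 1)
    (hb : b ≤ 1) : pairPower η K x a y b ≤ 4 * K * (1 / x ^ 2) := by
  have hx₀ : 0 < x := by linarith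
  have hnear : √(x ^ (-η) * a * K) ≤ √K / x := sqrt_rpow_neg_mul_mul_le hη hK hx ha
  have hfar : √(y ^ (-η) * b * K) ≤ √K / x :=
    sqrt_rpow_neg_mul_mul_le hη hK (hx.trans hxy) hb
      |>.trans (div_le_div_of_nonneg_left (sqrt_nonneg K) hx₀ hxy)
  calc pairPower η K x a y b
      ≤ (√K / x + √K / x) ^ 2 := by unfold pairPower; gcongr
    _ = 4 * √K ^ 2 * (1 / x ^ 2) := by ring
    _ = 4 * K * (1 / x ^ 2) := by rw [sq_sqrt hK]

end PathLoss

lemma sum_one_div_sq_le (s : Finset ℕ) : ∑ j ∈ s, 1 / (j : ℝ) ^ 2 ≤ π ^ 2 / 6 :=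
  sum_le_hasSum s (fun _ _ => by positivity) hasSum_zeta_two

lemma sum_Icc_three_one_div_sq_le (n : ℕ) :
    ∑ j ∈ Icc 3 n, 1 / (j : ℝ) ^ 2 ≤ π ^ 2 / 6 - 5 / 4 := by
  have h := sum_one_div_sq_le (insert 1 (insert 2 (Icc 3 n)))
  rw [sum_insert (by simp), sum_insert (by simp)] at h
  norm_num at h ⊢
  linarith

section Interference

variable {η K : ℝ} {T t : ℕ} {α : ℕ → ℝ}

lemma upstreamInterference_nonneg (hK : 0 ≤ K) (ht : 1 ≤ t) (hα : α 1 ≤ 1) :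
    0 ≤ upstreamInterference η K t α := by
  have hdist : 0 ≤ (t : ℝ) - 1 := sub_nonneg.2 (by exact_mod_cast ht)
  exact add_nonneg (sum_nonneg fun _ _ => pairPower_nonneg ..)
    (mul_nonneg (mul_nonneg (rpow_nonneg hdist _) (sub_nonneg.2 hα)) hK)

lemma downstreamInterference_nonneg : 0 ≤ downstreamInterference η K T t α :=
  add_nonneg (sum_nonneg fun _ _ => pairPower_nonneg ..) (pairPower_nonneg ..)

lemma upstreamInterference_le_sum (hη : 2 ≤ η) (hK : 0 ≤ K) (ht : 4 ≤ t)
    (hα : ∀ i, 1 ≤ i → i < t → α i ∈ Set.Icc 0 1) :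
    upstreamInterference η K t α ≤ 4 * K * ∑ j ∈ Icc 3 (t - 1), 1 / (j : ℝ) ^ 2 := by
  obtain ⟨n, rfl⟩ : ∃ n, t = n + 2 := ⟨t - 2, by lia⟩
  have hpair : ∀ j ∈ Icc 3 n,
      pairPower η K j (1 - α (n + 2 - j)) (j + 1) (α (n + 2 - j - 1))
        ≤ 4 * K * (1 / (j : ℝ) ^ 2) := by
    intro j hj
    rw [mem_Icc] at hj
    have hj₁ : (1 : ℝ) ≤ j := by exact_mod_cast (by lia : 1 ≤ j)
    exact pairPower_le hη hK hj₁ (by linarith)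
      (sub_le_self 1 (hα (n + 2 - j) (by lia) (by lia)).1)
      (hα (n + 2 - j - 1) (by lia) (by lia)).2
  have hfirst : (((n + 2 : ℕ) : ℝ) - 1) ^ (-η) * (1 - α 1) * K
      ≤ 4 * K * (1 / ((n + 1 : ℕ) : ℝ) ^ 2) := by
    have hdist : ((n + 2 : ℕ) : ℝ) - 1 = (n + 1 : ℕ) := by push_cast; ring
    rw [hdist]
    calc ((n + 1 : ℕ) : ℝ) ^ (-η) * (1 - α 1) * K
        ≤ K / ((n + 1 : ℕ) : ℝ) ^ 2 :=
          rpow_neg_mul_mul_le_div_sq hη hK (by simp) (sub_le_self 1 (hα 1 le_rfl (by lia)).1)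
      _ = 1 * K * (1 / ((n + 1 : ℕ) : ℝ) ^ 2) := by ring
      _ ≤ 4 * K * (1 / ((n + 1 : ℕ) : ℝ) ^ 2) := by gcongr; norm_num
  rw [show n + 2 - 1 = n + 1 by lia, sum_Icc_succ_top (by lia), mul_add, mul_sum]
  exact add_le_add (sum_le_sum hpair) hfirst

lemma downstreamInterference_le_sum (hη : 2 ≤ η) (hK : 0 ≤ K) (htT : t + 3 ≤ T)
    (hα : ∀ i, t < i → i ≤ T - 2 → α i ∈ Set.Icc 0 1) :
    downstreamInterference η K T t α ≤ 4 * K * ∑ j ∈ Icc 1 (T - t - 2), 1 / (j : ℝ) ^ 2 := by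
  obtain ⟨k, rfl⟩ : ∃ k, T = t + 3 + k := ⟨T - (t + 3), by lia⟩
  have hpair : ∀ j ∈ Icc 1 k,
      pairPower η K j (α (t + j)) (j + 1) (1 - α (t + j + 1)) ≤ 4 * K * (1 / (j : ℝ) ^ 2) := by
    intro j hj
    rw [mem_Icc] at hj
    exact pairPower_le hη hK (by exact_mod_cast hj.1) (by linarith)
      (hα (t + j) (by lia) (by lia)).2 (sub_le_self 1 (hα (t + j + 1) (by lia) (by lia)).1)
  have hlast : pairPower η K (((t + 3 + k : ℕ) : ℝ) - t - 2) (α (t + 3 + k - 2))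
      (((t + 3 + k : ℕ) : ℝ) - t - 1) 1 ≤ 4 * K * (1 / ((k + 1 : ℕ) : ℝ) ^ 2) := by
    have hdist : ((t + 3 + k : ℕ) : ℝ) - t - 2 = (k + 1 : ℕ) := by push_cast; ring
    rw [hdist]
    exact pairPower_le hη hK (by simp) (by linarith) (hα _ (by lia) le_rfl).2 le_rfl
  rw [downstreamInterference, show t + 3 + k - t - 3 = k by lia,
    show t + 3 + k - t - 2 = k + 1 by lia, sum_Icc_succ_top (by lia), mul_add, mul_sum]
  exact add_le_add (sum_le_sum hpair) hlast

end Interference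

section Rate

variable {η κ P N S I : ℝ} {T t : ℕ} {α : ℕ → ℝ}

lemma Pint_nonneg (hK : 0 ≤ κ * P) (ht : 1 ≤ t) (hα : α 1 ≤ 1) : 0 ≤ Pint η κ P T t α := by
  rw [Pint_eq_upstream_add_downstream]
  exact add_nonneg (upstreamInterference_nonneg hK ht hα) downstreamInterference_nonneg

lemma Pint_le_pi_sq_mul (hη : 2 ≤ η) (hK : 0 ≤ κ * P) (ht : 4 ≤ t) (htT : t + 3 ≤ T)
    (hα : ∀ i, 1 ≤ i → i ≤ T - 2 → α i ∈ Set.Icc 0 1) :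
    Pint η κ P T t α ≤ π ^ 2 * κ * P := by
  have hπ : π ^ 2 ≤ 15 := by nlinarith [pi_pos, pi_lt_d2]
  calc Pint η κ P T t α
      = upstreamInterference η (κ * P) t α + downstreamInterference η (κ * P) T t α :=
        Pint_eq_upstream_add_downstream ..
    _ ≤ 4 * (κ * P) * ∑ j ∈ Icc 3 (t - 1), 1 / (j : ℝ) ^ 2
          + 4 * (κ * P) * ∑ j ∈ Icc 1 (T - t - 2), 1 / (j : ℝ) ^ 2 :=
        add_le_add
          (upstreamInterference_le_sum hη hK ht fun i hi hit => hα i hi (by lia))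
          (downstreamInterference_le_sum hη hK htT fun i hti hi => hα i (by lia) hi)
    _ ≤ 4 * (κ * P) * (π ^ 2 / 6 - 5 / 4) + 4 * (κ * P) * (π ^ 2 / 6) := by
        gcongr
        · exact sum_Icc_three_one_div_sq_le _
        · exact sum_one_div_sq_le _
    _ = κ * P * (4 / 3 * π ^ 2 - 5) := by ring
    _ ≤ κ * P * π ^ 2 := by gcongr; linarith
    _ = π ^ 2 * κ * P := by ring

lemma one_sub_mul_le_Psig (η κ P : ℝ) (t : ℕ) (α : ℕ → ℝ) :
    (1 - α (t - 1)) * (κ * P) ≤ Psig η κ P t α :=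
  calc (1 - α (t - 1)) * (κ * P)
      ≤ √((1 - α (t - 1)) * (κ * P)) ^ 2 := (sqrt_le_iff.1 le_rfl).2
    _ ≤ (√((2 : ℝ) ^ (-η) * α (t - 2) * (κ * P)) + √((1 - α (t - 1)) * (κ * P))) ^ 2 := by
        gcongr
        exact le_add_of_nonneg_left (sqrt_nonneg _)
    _ ≤ Psig η κ P t α := le_add_of_nonneg_left (sq_nonneg _)

lemma le_Rt_of_le_Psig_of_Pint_le (hS : 0 ≤ S) (hsig : S ≤ Psig η κ P t α)
    (hint : Pint η κ P T t α ≤ I) (hpos : 0 < Pint η κ P T t α + N) :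
    1 / 2 * logb 2 (1 + S / (I + N)) ≤ Rt η κ P N T t α := by
  have hSINR : S / (I + N) ≤ Psig η κ P t α / (Pint η κ P T t α + N) :=
    div_le_div₀ (hS.trans hsig) hsig hpos (by linarith)
  have hratio : 0 ≤ S / (I + N) := div_nonneg hS (by linarith)
  exact mul_le_mul_of_nonneg_left
    (logb_le_logb_of_le one_lt_two (by linarith) (by linarith)) (by norm_num)

end Rate

theorem rate_lower_bound_half_splits_general {η κ P N : ℝ} (hη : 2 ≤ η) (hκ : 0 < κ) (hP : 0 < P)
    (hN : 0 < N) {T t : ℕ} (ht : 4 ≤ t) (htT : t + 3 ≤ T) {α : ℕ → ℝ}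
    (hα : ∀ i, 1 ≤ i → i ≤ T - 2 → α i ∈ Set.Icc 0 1) :
    1 / 2 * logb 2 (1 + (1 - α (t - 1)) * (κ * P) / (π ^ 2 * κ * P + N)) ≤ Rt η κ P N T t α
    ∧ (α (t - 1) < 1 →
        0 < 1 / 2 * logb 2 (1 + (1 - α (t - 1)) * (κ * P) / (π ^ 2 * κ * P + N))) := by
  have hK : 0 < κ * P := mul_pos hκ hP
  constructor
  · have hfrac : 0 ≤ 1 - α (t - 1) := sub_nonneg.2 (hα (t - 1) (by lia) (by lia)).2
    have hint : 0 ≤ Pint η κ P T t α :=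
      Pint_nonneg hK.le (by lia) (hα 1 le_rfl (by lia)).2
    exact le_Rt_of_le_Psig_of_Pint_le (mul_nonneg hfrac hK.le) (one_sub_mul_le_Psig ..)
      (Pint_le_pi_sq_mul hη hK.le ht htT hα) (by linarith)
  · intro hlt
    have hSINR : 0 < (1 - α (t - 1)) * (κ * P) / (π ^ 2 * κ * P + N) :=
      div_pos (mul_pos (sub_pos.2 hlt) hK) (by positivity)
    exact mul_pos one_half_pos (logb_pos one_lt_two (by linarith))

/-- With all power splits `α_i = 1/2`, the reception rate at every interior node
is at least `½ log₂(1 + κP/(2(π²κP + N)))`, a strictly positive bound that is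
independent of `T` and `t`. -/
theorem rate_lower_bound_half_splits
    (η κ P N : ℝ) (hη : 2 ≤ η) (hκ : 0 < κ) (hP : 0 < P) (hN : 0 < N)
    (T t : ℕ) (hT : 7 ≤ T) (ht4 : 4 ≤ t) (htT : t ≤ T - 3)
    (α : ℕ → ℝ) (hα : ∀ i, 1 ≤ i → i ≤ T - 2 → α i = 1 / 2) :
    (1 / 2) * Real.logb 2 (1 + κ * P / (2 * (Real.pi ^ 2 * κ * P + N)))
        ≤ Rt η κ P N T t α
    ∧ 0 < (1 / 2) * Real.logb 2 (1 + κ * P / (2 * (Real.pi ^ 2 * κ * P + N))) := by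
  have h := rate_lower_bound_half_splits_general hη hκ hP hN ht4 (by lia : t + 3 ≤ T) (α := α)
    fun i hi hiT => by norm_num [hα i hi hiT]
  rw [hα (t - 1) (by lia) (by lia), show (1 - 1 / 2) * (κ * P) = κ * P / 2 by ring, div_div] at h
  exact ⟨h.1, h.2 (by norm_num)⟩
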